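/- Let $n \ge 1$, let $a, b$ be $n \times n$ complex matrices with $\|a\|_p = 1$ and $\|b\|_q = 1$, where $1 < p \le 2$ and $1/p + 1/q = 1$. Then $\mathrm{Tr}(|b|^2 \, |a|^{2-p}) \le 1$, where the left-hand side is a real number (the trace of the product of the positive semidefinite matrices $|b|^2$ and $|a|^{2-p}$, which has real trace). -/

import Mathlib

open Matrix
open scoped ComplexOrder

/-- `matAbs x` is `|x|`, the unique positive semidefinite square root of `xᴴ * x`. -/
noncomputable def matAbs {n : ℕ} (x : Matrix (Fin n) (Fin n) ℂ) : Matrix (Fin n) (Fin n) ℂ :=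
  open scoped MatrixOrder in CFC.sqrt (xᴴ * x)

/-- `matRpow x r` is the real power `x ^ r` defined via the continuous functional calculus. -/
noncomputable def matRpow {n : ℕ} (x : Matrix (Fin n) (Fin n) ℂ) (r : ℝ) :
    Matrix (Fin n) (Fin n) ℂ :=
  cfc (fun t : ℝ => t ^ r) x

/-- The Schatten `r`-norm `(Tr(|x|^r))^(1/r)`. -/
noncomputable def schatten {n : ℕ} (r : ℝ) (x : Matrix (Fin n) (Fin n) ℂ) : ℝ :=
  (Matrix.trace (matRpow (matAbs x) r)).re ^ (1 / r)

/-!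
In eigenbases `u i` of `A` and `v j` of `B`, with eigenvalues `α i` and `β j`, the trace of
`f(A) g(B)` is the sum of the `f (α i) * g (β j)` with nonnegative weights `|⟨u i, v j⟩|²`.
Hence every scalar inequality `f s * g t ≤ F s + G t` on the spectra passes to
`Tr (f(A) g(B)) ≤ Tr (F(A)) + Tr (G(B))`, even though `A` and `B` need not commute. Young's
inequality with weights `2 / q + (2 - p) / p = 1`, applied to `|b|` and `|a|`, then bounds the
trace by `(2 / q) Tr |b|^q + ((2 - p) / p) Tr |a|^p = 1`.
-/

section TraceInequalities

variable {ι 𝕜 : Type*} [Fintype ι] [DecidableEq ι] [RCLike 𝕜] {A B : Matrix ι ι 𝕜}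

lemma trace_diagonal_mul_mul_diagonal_mul_conjTranspose {κ : Type*} [Fintype κ] [DecidableEq κ]
    (d : ι → ℝ) (e : κ → ℝ) (W : Matrix ι κ 𝕜) :
    trace (diagonal (fun i ↦ (d i : 𝕜)) * W * (diagonal (fun j ↦ (e j : 𝕜)) * Wᴴ)) =
      ((∑ i, ∑ j, ‖W i j‖ ^ 2 * (d i * e j) : ℝ) : 𝕜) := by
  push_cast
  refine Finset.sum_congr rfl fun i _ ↦ ?_
  rw [diag_apply, mul_apply]
  refine Finset.sum_congr rfl fun j _ ↦ ?_
  rw [diagonal_mul, diagonal_mul, conjTranspose_apply, ← RCLike.mul_conj, RCLike.star_def]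
  ring

lemma star_eigenvectorUnitary_mul_eigenvectorUnitary_apply
    (hA : A.IsHermitian) (hB : B.IsHermitian) (i j : ι) :
    (star (hA.eigenvectorUnitary : Matrix ι ι 𝕜) * hB.eigenvectorUnitary) i j =
      inner 𝕜 (hA.eigenvectorBasis i) (hB.eigenvectorBasis j) := by
  simp [mul_apply, PiLp.inner_apply, mul_comm]

lemma trace_cfc_mul_cfc (hA : A.IsHermitian) (hB : B.IsHermitian) (f g : ℝ → ℝ) :
    trace (cfc f A * cfc g B) =
      ((∑ i, ∑ j, ‖inner 𝕜 (hA.eigenvectorBasis i) (hB.eigenvectorBasis j)‖ ^ 2 *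
        (f (hA.eigenvalues i) * g (hB.eigenvalues j)) : ℝ) : 𝕜) := by
  let U : Matrix ι ι 𝕜 := hA.eigenvectorUnitary
  let V : Matrix ι ι 𝕜 := hB.eigenvectorUnitary
  let D : Matrix ι ι 𝕜 := diagonal fun i ↦ (f (hA.eigenvalues i) : 𝕜)
  let E : Matrix ι ι 𝕜 := diagonal fun j ↦ (g (hB.eigenvalues j) : 𝕜)
  have hf : cfc f A = U * D * star U := by
    rw [hA.cfc_eq, IsHermitian.cfc, Unitary.conjStarAlgAut_apply]; rfl
  have hg : cfc g B = V * E * star V := by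
    rw [hB.cfc_eq, IsHermitian.cfc, Unitary.conjStarAlgAut_apply]; rfl
  calc trace (cfc f A * cfc g B)
      = trace (D * (star U * V) * (E * (star U * V)ᴴ)) := by
        rw [hf, hg, mul_assoc U, mul_assoc U, trace_mul_comm]
        simp only [← star_eq_conjTranspose, star_mul, star_star, mul_assoc]
    _ = _ := by
        rw [trace_diagonal_mul_mul_diagonal_mul_conjTranspose]
        simp only [U, V, star_eigenvectorUnitary_mul_eigenvectorUnitary_apply]

theorem re_trace_cfc_mul_cfc_le (hA : A.IsHermitian) (hB : B.IsHermitian) {f g F G : ℝ → ℝ}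
    (hfg : ∀ s ∈ spectrum ℝ A, ∀ t ∈ spectrum ℝ B, f s * g t ≤ F s + G t) :
    RCLike.re (trace (cfc f A * cfc g B)) ≤
      RCLike.re (trace (cfc F A)) + RCLike.re (trace (cfc G B)) := by
  have hF : cfc F A = cfc F A * cfc (fun _ ↦ 1 : ℝ → ℝ) B := by
    rw [cfc_const_one ℝ B hB.isSelfAdjoint, mul_one]
  have hG : cfc G B = cfc (fun _ ↦ 1 : ℝ → ℝ) A * cfc G B := by
    rw [cfc_const_one ℝ A hA.isSelfAdjoint, one_mul]
  rw [hF, hG]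
  simp only [trace_cfc_mul_cfc hA hB, RCLike.ofReal_re, mul_one, one_mul,
    ← Finset.sum_add_distrib, ← mul_add]
  gcongr with i _ j _
  exact hfg _ (hA.eigenvalues_mem_spectrum_real i) _ (hB.eigenvalues_mem_spectrum_real j)

lemma rpow_mul_rpow_le_weighted_add {x y s t p q : ℝ} (hx : 0 ≤ x) (hy : 0 ≤ y)
    (hs : 0 ≤ s) (ht : 0 ≤ t) (hp : 0 < p) (hq : 0 < q) (hst : s / p + t / q = 1) :
    x ^ s * y ^ t ≤ s / p * x ^ p + t / q * y ^ q := by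
  calc x ^ s * y ^ t = (x ^ p) ^ (s / p) * (y ^ q) ^ (t / q) := by
        rw [← Real.rpow_mul hx, ← Real.rpow_mul hy, mul_div_cancel₀ _ hp.ne',
          mul_div_cancel₀ _ hq.ne']
    _ ≤ s / p * x ^ p + t / q * y ^ q :=
        Real.geom_mean_le_arith_mean2_weighted (by positivity) (by positivity) (by positivity)
          (by positivity) hst

lemma re_trace_cfc_const_mul (c : ℝ) (f : ℝ → ℝ) (A : Matrix ι ι 𝕜) :
    RCLike.re (trace (cfc (fun x ↦ c * f x) A)) = c * RCLike.re (trace (cfc f A)) := by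
  rw [cfc_const_mul c f A (A.finite_real_spectrum.continuousOn f), trace_smul, RCLike.smul_re]

theorem re_trace_rpow_mul_rpow_le (hA : A.PosSemidef) (hB : B.PosSemidef) {s t p q : ℝ}
    (hs : 0 ≤ s) (ht : 0 ≤ t) (hp : 0 < p) (hq : 0 < q) (hst : s / p + t / q = 1) :
    RCLike.re (trace (cfc (fun x : ℝ ↦ x ^ s) A * cfc (fun x : ℝ ↦ x ^ t) B)) ≤
      s / p * RCLike.re (trace (cfc (fun x : ℝ ↦ x ^ p) A)) +
        t / q * RCLike.re (trace (cfc (fun x : ℝ ↦ x ^ q) B)) := by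
  rw [← re_trace_cfc_const_mul, ← re_trace_cfc_const_mul]
  refine re_trace_cfc_mul_cfc_le hA.isHermitian hB.isHermitian fun x hx y hy ↦ ?_
  open scoped MatrixOrder in
  exact rpow_mul_rpow_le_weighted_add (spectrum_nonneg_of_nonneg hA.nonneg hx)
    (spectrum_nonneg_of_nonneg hB.nonneg hy) hs ht hp hq hst

end TraceInequalities

section Schatten

variable {n : ℕ} (x : Matrix (Fin n) (Fin n) ℂ)

open scoped MatrixOrder in
lemma posSemidef_matAbs : (matAbs x).PosSemidef :=
  nonneg_iff_posSemidef.mp (CFC.sqrt_nonneg _)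

open scoped MatrixOrder in
lemma posSemidef_matRpow_matAbs (r : ℝ) : (matRpow (matAbs x) r).PosSemidef :=
  nonneg_iff_posSemidef.mp <| cfc_nonneg fun _ ht ↦
    Real.rpow_nonneg (spectrum_nonneg_of_nonneg (posSemidef_matAbs x).nonneg ht) r

lemma schatten_rpow {r : ℝ} (hr : r ≠ 0) :
    schatten r x ^ r = (trace (matRpow (matAbs x) r)).re := by
  rw [schatten, one_div]
  exact Real.rpow_inv_rpow (RCLike.nonneg_iff.mp (posSemidef_matRpow_matAbs x r).trace_nonneg).1 hr

end Schatten

theorem trace_sq_mul_rpow_le_one {n : ℕ} (hn : 1 ≤ n)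
    (a b : Matrix (Fin n) (Fin n) ℂ) (p q : ℝ)
    (hp : 1 < p) (hp2 : p ≤ 2) (hpq : 1 / p + 1 / q = 1)
    (ha : schatten p a = 1) (hb : schatten q b = 1) :
    (Matrix.trace (matRpow (matAbs b) 2 * matRpow (matAbs a) (2 - p))).re ≤ 1 := by
  have hp_pos : 0 < p := by positivity
  have hq_pos : 0 < q := by
    have hp_inv : 1 / p < 1 := (div_lt_one hp_pos).mpr hp
    exact one_div_pos.mp (by linarith)
  have hweights : 2 / q + (2 - p) / p = 1 := by
    rw [sub_div, div_self hp_pos.ne']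
    linear_combination 2 * hpq
  have ha_trace : (trace (matRpow (matAbs a) p)).re = 1 := by
    rw [← schatten_rpow a hp_pos.ne', ha, Real.one_rpow]
  have hb_trace : (trace (matRpow (matAbs b) q)).re = 1 := by
    rw [← schatten_rpow b hq_pos.ne', hb, Real.one_rpow]
  calc (trace (matRpow (matAbs b) 2 * matRpow (matAbs a) (2 - p))).re
      ≤ 2 / q * (trace (matRpow (matAbs b) q)).re +
          (2 - p) / p * (trace (matRpow (matAbs a) p)).re :=
        re_trace_rpow_mul_rpow_le (posSemidef_matAbs b) (posSemidef_matAbs a) zero_le_two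
          (sub_nonneg.mpr hp2) hq_pos hp_pos hweights
    _ = 1 := by rw [ha_trace, hb_trace, mul_one, mul_one, hweights]
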